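/- A regular category C is a Mal'tsev category if and only if the Ord-category 𝕆(C) of internal preorders in C, with the preorder on morphisms defined by (f,f̄) ≼ (g,ḡ): (X,R)→(Y,S) iff (f,g) ∈_X S, is an Ord-Mal'tsev category. -/

import Mathlib

open CategoryTheory

universe w v u

/-- An `Ord`-enrichment of a category: a preorder on each hom-set,
preserved by composition on both sides. -/
class OrdEnrichment (C : Type u) [Category.{v} C] : Type (max u v) where
  ord : ∀ {X Y : C}, (X ⟶ Y) → (X ⟶ Y) → Prop
  ord_refl : ∀ {X Y : C} (f : X ⟶ Y), ord f f
  ord_trans : ∀ {X Y : C} {f g h : X ⟶ Y}, ord f g → ord g h → ord f h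
  precomp_ord : ∀ {X Y Z : C} (e : X ⟶ Y) {f g : Y ⟶ Z}, ord f g → ord (e ≫ f) (e ≫ g)
  postcomp_ord : ∀ {X Y Z : C} {f g : X ⟶ Y} (h : Y ⟶ Z), ord f g → ord (f ≫ h) (g ≫ h)

/-- The preorder on hom-sets of an `Ord`-category. -/
def homLe {C : Type u} [Category.{v} C] [OrdEnrichment C] {X Y : C} (f g : X ⟶ Y) : Prop :=
  OrdEnrichment.ord f g

infixl:50 " ≼ " => homLe

section

variable {C : Type u} [Category.{v} C] [OrdEnrichment C]

/-- A full (ff-) morphism. -/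
def IsFF {X Y : C} (m : X ⟶ Y) : Prop :=
  ∀ {A : C} (a a' : A ⟶ X), (a ≫ m) ≼ (a' ≫ m) → a ≼ a'

/-- An ff-monomorphism: a full monomorphism. -/
def IsFFMono {X Y : C} (m : X ⟶ Y) : Prop := IsFF m ∧ Mono m

/-- An so-morphism: a morphism left orthogonal to every ff-monomorphism. -/
def IsSO {A B : C} (e : A ⟶ B) : Prop :=
  ∀ {X Y : C} (m : X ⟶ Y), IsFFMono m → ∀ (u : A ⟶ X) (v : B ⟶ Y),
    u ≫ m = e ≫ v → ∃ d : B ⟶ X, e ≫ d = u ∧ d ≫ m = v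

/-- The (strict) comma object square for the ordered pair `(f, g)`. -/
structure IsCommaSq {X Y Z : C} (f : X ⟶ Y) (g : Z ⟶ Y) (P : C)
    (π₁ : P ⟶ X) (π₂ : P ⟶ Z) : Prop where
  le : (π₁ ≫ f) ≼ (π₂ ≫ g)
  lift : ∀ {A : C} (α : A ⟶ X) (β : A ⟶ Z), (α ≫ f) ≼ (β ≫ g) →
    ∃! h : A ⟶ P, h ≫ π₁ = α ∧ h ≫ π₂ = β
  lift_ord : ∀ {A : C} {h h' : A ⟶ P}, (h ≫ π₁) ≼ (h' ≫ π₁) → (h ≫ π₂) ≼ (h' ≫ π₂) → h ≼ h'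

/-- A 2-pullback square (pullback with the `Ord`-enriched universal property). -/
structure Is2Pullback {X Y Z : C} (f : X ⟶ Z) (g : Y ⟶ Z) (P : C)
    (p : P ⟶ X) (q : P ⟶ Y) : Prop where
  comm : p ≫ f = q ≫ g
  lift : ∀ {A : C} (a : A ⟶ X) (b : A ⟶ Y), a ≫ f = b ≫ g →
    ∃! h : A ⟶ P, h ≫ p = a ∧ h ≫ q = b
  lift_ord : ∀ {A : C} {h h' : A ⟶ P}, (h ≫ p) ≼ (h' ≫ p) → (h ≫ q) ≼ (h' ≫ q) → h ≼ h'

/-- A binary 2-product. -/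
structure Is2Product (X Y : C) (P : C) (p : P ⟶ X) (q : P ⟶ Y) : Prop where
  lift : ∀ {A : C} (a : A ⟶ X) (b : A ⟶ Y), ∃! h : A ⟶ P, h ≫ p = a ∧ h ≫ q = b
  lift_ord : ∀ {A : C} {h h' : A ⟶ P}, (h ≫ p) ≼ (h' ≫ p) → (h ≫ q) ≼ (h' ≫ q) → h ≼ h'

/-- A 2-equalizer. -/
structure Is2Equalizer {X Y : C} (f g : X ⟶ Y) (E : C) (i : E ⟶ X) : Prop where
  comm : i ≫ f = i ≫ g
  lift : ∀ {A : C} (a : A ⟶ X), a ≫ f = a ≫ g → ∃! h : A ⟶ E, h ≫ i = a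
  lift_ord : ∀ {A : C} {h h' : A ⟶ E}, (h ≫ i) ≼ (h' ≫ i) → h ≼ h'

/-- A bicoinserter of a parallel pair. -/
structure IsBicoinserter {X A E : C} (a b : X ⟶ A) (e : A ⟶ E) : Prop where
  le : (a ≫ e) ≼ (b ≫ e)
  desc : ∀ {F : C} (f : A ⟶ F), (a ≫ f) ≼ (b ≫ f) →
    ∃ t : E ⟶ F, (e ≫ t) ≼ f ∧ f ≼ (e ≫ t)
  desc_ord : ∀ {F : C} {f f' : A ⟶ F} {t t' : E ⟶ F},
    (e ≫ t) ≼ f → f ≼ (e ≫ t) → (e ≫ t') ≼ f' → f' ≼ (e ≫ t') → f ≼ f' → t ≼ t'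

/-- A relation from `X` to `Y` in an `Ord`-category: a jointly ff-monomorphic span. -/
structure RelStr (X Y : C) : Type (max u v) where
  obj : C
  p : obj ⟶ X
  q : obj ⟶ Y
  jointly_ff : ∀ {A : C} (a a' : A ⟶ obj), (a ≫ p) ≼ (a' ≫ p) → (a ≫ q) ≼ (a' ≫ q) → a ≼ a'
  jointly_mono : ∀ {A : C} (a a' : A ⟶ obj), a ≫ p = a' ≫ p → a ≫ q = a' ≫ q → a = a'

/-- `(x, y) ∈_A R`. -/
def RelStr.Mem {X Y : C} (R : RelStr X Y) {A : C} (x : A ⟶ X) (y : A ⟶ Y) : Prop :=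
  ∃ h : A ⟶ R.obj, h ≫ R.p = x ∧ h ≫ R.q = y

/-- `R ⊆ S`: `R` factors through `S` (over `X × Y`). -/
def RelStr.Sub {X Y : C} (R S : RelStr X Y) : Prop :=
  ∃ φ : R.obj ⟶ S.obj, φ ≫ S.p = R.p ∧ φ ≫ S.q = R.q

/-- `R ≅ S`: mutual factorisation. -/
def RelStr.Iso {X Y : C} (R S : RelStr X Y) : Prop := R.Sub S ∧ S.Sub R

/-- The opposite relation `R°`. -/
def RelStr.op {X Y : C} (R : RelStr X Y) : RelStr Y X where
  obj := R.obj
  p := R.q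
  q := R.p
  jointly_ff := fun a a' h1 h2 => R.jointly_ff a a' h2 h1
  jointly_mono := fun a a' h1 h2 => R.jointly_mono a a' h2 h1

/-- A relation is an (order) ideal when it is closed under lowering the first
coordinate and raising the second coordinate. -/
def IsIdealRel {X Y : C} (R : RelStr X Y) : Prop :=
  ∀ {A : C} (x x' : A ⟶ X) (y y' : A ⟶ Y), x' ≼ x → R.Mem x y → y ≼ y' → R.Mem x' y'

/-- The relation `f_♯` given by the span `(1_X, f)`. -/
def sharpRel {X Y : C} (f : X ⟶ Y) : RelStr X Y where
  obj := X
  p := 𝟙 X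
  q := f
  jointly_ff := fun a a' h1 _ => by simpa using h1
  jointly_mono := fun a a' h1 _ => by simpa using h1

/-- The relation `f°`, the opposite of `f_♯`. -/
def cosharpRel {X Y : C} (f : X ⟶ Y) : RelStr Y X := (sharpRel f).op

/-- `M` is the meet (intersection) `R ∧ S` of two relations. -/
def IsMeetRel {X Y : C} (R S M : RelStr X Y) : Prop :=
  M.Sub R ∧ M.Sub S ∧
    ∀ {A : C} (x : A ⟶ X) (y : A ⟶ Y), R.Mem x y → S.Mem x y → M.Mem x y

/-- `T` is the composite `S ∘ R` of the relations `R : X ↬ Y` and `S : Y ↬ Z`,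
obtained via the (so-morphism, ff-monomorphism) factorisation of the span
given by the 2-pullback over the middle object. -/
def IsCompositeRel {X Y Z : C} (R : RelStr X Y) (S : RelStr Y Z) (T : RelStr X Z) : Prop :=
  ∃ (P : C) (p₁ : P ⟶ R.obj) (p₂ : P ⟶ S.obj) (e : P ⟶ T.obj),
    Is2Pullback R.q S.p P p₁ p₂ ∧ IsSO e ∧ e ≫ T.p = p₁ ≫ R.p ∧ e ≫ T.q = p₂ ≫ S.q

/-- `R` is the ideal `f_* = f / 1_Y : X ↬ Y`. -/
def IsStarRel {X Y : C} (f : X ⟶ Y) (R : RelStr X Y) : Prop :=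
  IsCommaSq f (𝟙 Y) R.obj R.p R.q

/-- `R` is the ideal `f^* = 1_Y / f : Y ↬ X`. -/
def IsCostarRel {X Y : C} (f : X ⟶ Y) (R : RelStr Y X) : Prop :=
  IsCommaSq (𝟙 Y) f R.obj R.p R.q

/-- `R` is the identity ideal `I_X = 1_X / 1_X`. -/
def IsIdRel (X : C) (R : RelStr X X) : Prop :=
  IsCommaSq (𝟙 X) (𝟙 X) R.obj R.p R.q

/-- `S` is the 2-pullback of the relation `R ↣ X × Y` along `f × g`. -/
def IsRelPullback {X Y U V : C} (R : RelStr X Y) (f : U ⟶ X) (g : V ⟶ Y)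
    (S : RelStr U V) : Prop :=
  ∃ h : S.obj ⟶ R.obj, h ≫ R.p = S.p ≫ f ∧ h ≫ R.q = S.q ≫ g ∧
    ∀ {A : C} (a : A ⟶ U) (b : A ⟶ V) (c : A ⟶ R.obj),
      c ≫ R.p = a ≫ f → c ≫ R.q = b ≫ g →
      ∃ d : A ⟶ S.obj, d ≫ S.p = a ∧ d ≫ S.q = b ∧ d ≫ h = c

/-- A binary 2-coproduct. -/
structure Is2Coproduct (X Y : C) (P : C) (i : X ⟶ P) (j : Y ⟶ P) : Prop where
  desc : ∀ {A : C} (a : X ⟶ A) (b : Y ⟶ A), ∃! h : P ⟶ A, i ≫ h = a ∧ j ≫ h = b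
  desc_ord : ∀ {A : C} {h h' : P ⟶ A}, (i ≫ h) ≼ (i ≫ h') → (j ≫ h) ≼ (j ≫ h') → h ≼ h'

/-- A ternary 2-coproduct. -/
structure Is3Coproduct (X Y Z : C) (P : C) (i : X ⟶ P) (j : Y ⟶ P) (k : Z ⟶ P) : Prop where
  desc : ∀ {A : C} (a : X ⟶ A) (b : Y ⟶ A) (c : Z ⟶ A),
    ∃! h : P ⟶ A, i ≫ h = a ∧ j ≫ h = b ∧ k ≫ h = c
  desc_ord : ∀ {A : C} {h h' : P ⟶ A},
    (i ≫ h) ≼ (i ≫ h') → (j ≫ h) ≼ (j ≫ h') → (k ≫ h) ≼ (k ≫ h') → h ≼ h'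

/-- Reflexivity of a relation on `X`: the diagonal factors through it. -/
def ReflexiveRel {X : C} (R : RelStr X X) : Prop := R.Mem (𝟙 X) (𝟙 X)

/-- Transitivity of a relation on `X`: `R ∘ R ⊆ R`. -/
def TransitiveRel {X : C} (R : RelStr X X) : Prop :=
  ∀ T : RelStr X X, IsCompositeRel R R T → T.Sub R

/-- A congruence: a reflexive and transitive ideal. -/
def IsCongruence {X : C} (R : RelStr X X) : Prop :=
  IsIdealRel R ∧ ReflexiveRel R ∧ TransitiveRel R

/-- An effective congruence: `R ≅ f^* ∘ f_*` for some morphism `f`. -/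
def EffectiveCongruence {X : C} (R : RelStr X X) : Prop :=
  ∃ (Y : C) (f : X ⟶ Y) (Fstar : RelStr X Y) (Fco : RelStr Y X) (T : RelStr X X),
    IsStarRel f Fstar ∧ IsCostarRel f Fco ∧ IsCompositeRel Fstar Fco T ∧ R.Iso T

/-- The `Ord`-enriched difunctionality property of a relation. -/
def OrdDifunctional {X Y : C} (D : RelStr X Y) : Prop :=
  ∀ {A : C} (x u u' : A ⟶ X) (y y' v : A ⟶ Y),
    D.Mem x y → y ≼ y' → D.Mem u y' → u ≼ u' → D.Mem u' v → D.Mem x v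

end

/-- A regular `Ord`-category: finite weighted limits, an
(so-morphism, ff-monomorphism) factorisation system, so-morphisms stable under
2-pullbacks, and every so-morphism the bicoinserter of its comma object projections. -/
structure IsRegularOrd (C : Type u) [Category.{v} C] [OrdEnrichment C] : Prop where
  hasTerminal : ∃ T : C, ∀ A : C, ∃ f : A ⟶ T, ∀ g : A ⟶ T, g = f
  has2Products : ∀ X Y : C, ∃ (P : C) (p : P ⟶ X) (q : P ⟶ Y), Is2Product X Y P p q
  has2Equalizers : ∀ {X Y : C} (f g : X ⟶ Y), ∃ (E : C) (i : E ⟶ X), Is2Equalizer f g E i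
  has2Pullbacks : ∀ {X Y Z : C} (f : X ⟶ Z) (g : Y ⟶ Z),
    ∃ (P : C) (p : P ⟶ X) (q : P ⟶ Y), Is2Pullback f g P p q
  hasCommaObjects : ∀ {X Y Z : C} (f : X ⟶ Y) (g : Z ⟶ Y),
    ∃ (P : C) (p : P ⟶ X) (q : P ⟶ Z), IsCommaSq f g P p q
  fact : ∀ {X Y : C} (f : X ⟶ Y), ∃ (I : C) (e : X ⟶ I) (m : I ⟶ Y),
    IsSO e ∧ IsFFMono m ∧ e ≫ m = f
  so_pullback_stable : ∀ {X Y Z P : C} (f : X ⟶ Z) (g : Y ⟶ Z) (p : P ⟶ X) (q : P ⟶ Y),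
    Is2Pullback f g P p q → IsSO g → IsSO p
  so_bicoinserter : ∀ {A B P : C} (e : A ⟶ B), IsSO e →
    ∀ (π₁ π₂ : P ⟶ A), IsCommaSq e e P π₁ π₂ → IsBicoinserter π₁ π₂ e

/-- An `Ord`-Mal'tsev category: every ideal is `Ord`-difunctional. -/
def IsOrdMaltsev (C : Type u) [Category.{v} C] [OrdEnrichment C] : Prop :=
  ∀ (X Y : C) (D : RelStr X Y), IsIdealRel D → OrdDifunctional D

/-- An `Ord`-W-Mal'tsev object: every ideal is `Ord`-difunctional with respect to
generalised elements with domain `Y`. -/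
def IsOrdWMaltsevObj {C : Type u} [Category.{v} C] [OrdEnrichment C] (Y : C) : Prop :=
  ∀ (X Z : C) (R : RelStr X Z), IsIdealRel R →
    ∀ (x u u' : Y ⟶ X) (z z' v : Y ⟶ Z),
      R.Mem x z → z ≼ z' → R.Mem u z' → u ≼ u' → R.Mem u' v → R.Mem x v


/-- An ordinary relation in a (1-dimensional) category: a jointly monomorphic span. -/
structure OrdinaryRel {C : Type u} [Category.{v} C] (X Y : C) : Type (max u v) where
  obj : C
  p : obj ⟶ X
  q : obj ⟶ Y
  jointly_mono : ∀ {A : C} (a a' : A ⟶ obj), a ≫ p = a' ≫ p → a ≫ q = a' ≫ q → a = a'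

def OrdinaryRel.Mem {C : Type u} [Category.{v} C] {X Y : C} (R : OrdinaryRel X Y)
    {A : C} (x : A ⟶ X) (y : A ⟶ Y) : Prop :=
  ∃ h : A ⟶ R.obj, h ≫ R.p = x ∧ h ≫ R.q = y

/-- A Mal'tsev category: every ordinary relation is difunctional. -/
def IsMaltsevCat (C : Type u) [Category.{v} C] : Prop :=
  ∀ (X Y : C) (D : OrdinaryRel X Y) (W : C) (x u : W ⟶ X) (y v : W ⟶ Y),
    D.Mem x y → D.Mem u y → D.Mem u v → D.Mem x v

/-- A strong epimorphism, via left orthogonality to monomorphisms. -/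
def IsStrongEpiOrtho {C : Type u} [Category.{v} C] {A B : C} (e : A ⟶ B) : Prop :=
  ∀ {X Y : C} (m : X ⟶ Y), Mono m → ∀ (u : A ⟶ X) (v : B ⟶ Y),
    u ≫ m = e ≫ v → ∃ d : B ⟶ X, e ≫ d = u ∧ d ≫ m = v

/-- A (1-dimensional) regular category: finite limits, (strong epi, mono)
factorisations, and strong epimorphisms stable under pullback. -/
structure IsRegularCat (C : Type u) [Category.{v} C] : Prop where
  hasTerminal : ∃ T : C, ∀ A : C, ∃ f : A ⟶ T, ∀ g : A ⟶ T, g = f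
  hasBinaryProducts : ∀ X Y : C, ∃ (P : C) (p : P ⟶ X) (q : P ⟶ Y),
    ∀ {A : C} (a : A ⟶ X) (b : A ⟶ Y), ∃! h : A ⟶ P, h ≫ p = a ∧ h ≫ q = b
  hasEqualizers : ∀ {X Y : C} (f g : X ⟶ Y), ∃ (E : C) (i : E ⟶ X), i ≫ f = i ≫ g ∧
    ∀ {A : C} (a : A ⟶ X), a ≫ f = a ≫ g → ∃! h : A ⟶ E, h ≫ i = a
  fact : ∀ {X Y : C} (f : X ⟶ Y), ∃ (I : C) (e : X ⟶ I) (m : I ⟶ Y),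
    IsStrongEpiOrtho e ∧ Mono m ∧ e ≫ m = f
  stable : ∀ {X Y Z P : C} (f : X ⟶ Z) (g : Y ⟶ Z) (p : P ⟶ X) (q : P ⟶ Y),
    p ≫ f = q ≫ g →
    (∀ {A : C} (a : A ⟶ X) (b : A ⟶ Y), a ≫ f = b ≫ g →
      ∃! h : A ⟶ P, h ≫ p = a ∧ h ≫ q = b) →
    IsStrongEpiOrtho g → IsStrongEpiOrtho p

/-- An internal preorder in `C`: an ordinary reflexive and transitive relation
`R ↣ X × X`. -/
structure PreordObj (C : Type u) [Category.{v} C] : Type (max u v) where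
  X : C
  R : C
  r1 : R ⟶ X
  r2 : R ⟶ X
  jmono : ∀ {A : C} (a a' : A ⟶ R), a ≫ r1 = a' ≫ r1 → a ≫ r2 = a' ≫ r2 → a = a'
  refl : ∃ e : X ⟶ R, e ≫ r1 = 𝟙 X ∧ e ≫ r2 = 𝟙 X
  trans : ∀ {A : C} (x y z : A ⟶ X),
    (∃ h : A ⟶ R, h ≫ r1 = x ∧ h ≫ r2 = y) → (∃ h : A ⟶ R, h ≫ r1 = y ∧ h ≫ r2 = z) →
    ∃ h : A ⟶ R, h ≫ r1 = x ∧ h ≫ r2 = z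

/-- A morphism of internal preorders: a pair `(f, f̄)` compatible with the relations. -/
structure PreordHom {C : Type u} [Category.{v} C] (P Q : PreordObj C) : Type v where
  f : P.X ⟶ Q.X
  fbar : P.R ⟶ Q.R
  comm1 : fbar ≫ Q.r1 = P.r1 ≫ f
  comm2 : fbar ≫ Q.r2 = P.r2 ≫ f

/-- The category `O(C)` of internal preorders in `C`. -/
instance PreordObj.category {C : Type u} [Category.{v} C] :
    Category.{v} (PreordObj C) where
  Hom P Q := PreordHom P Q
  id P := ⟨𝟙 P.X, 𝟙 P.R, by simp, by simp⟩
  comp u v := ⟨u.f ≫ v.f, u.fbar ≫ v.fbar, by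
      rw [Category.assoc, v.comm1, ← Category.assoc, u.comm1, Category.assoc], by
      rw [Category.assoc, v.comm2, ← Category.assoc, u.comm2, Category.assoc]⟩
  id_comp := by
    intro P Q u
    cases u
    dsimp only [CategoryStruct.comp, CategoryStruct.id]
    congr 1 <;> simp
  comp_id := by
    intro P Q u
    cases u
    dsimp only [CategoryStruct.comp, CategoryStruct.id]
    congr 1 <;> simp
  assoc := by
    intro P Q R' S' u v w
    dsimp only [CategoryStruct.comp]
    congr 1 <;> simp

/-- The `Ord`-enrichment of `O(C)`, giving `𝕆(C)`:
`(f, f̄) ≼ (g, ḡ) : (X, R) → (Y, S)` iff `(f, g) ∈_X S`. -/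
instance PreordObj.ordEnrichment {C : Type u} [Category.{v} C] :
    OrdEnrichment (PreordObj C) where
  ord {P Q} u v := ∃ h : P.X ⟶ Q.R, h ≫ Q.r1 = u.f ∧ h ≫ Q.r2 = v.f
  ord_refl := by
    intro P Q u
    obtain ⟨e, he1, he2⟩ := Q.refl
    exact ⟨u.f ≫ e, by rw [Category.assoc, he1, Category.comp_id],
      by rw [Category.assoc, he2, Category.comp_id]⟩
  ord_trans := by
    rintro P Q u v w ⟨h1, h11, h12⟩ ⟨h2, h21, h22⟩
    exact Q.trans u.f v.f w.f ⟨h1, h11, h12⟩ ⟨h2, h21, h22⟩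
  precomp_ord := by
    rintro P Q R' e u v ⟨h, h1, h2⟩
    exact ⟨e.f ≫ h, by rw [Category.assoc, h1]; rfl, by rw [Category.assoc, h2]; rfl⟩
  postcomp_ord := by
    rintro P Q R' u v k ⟨h, h1, h2⟩
    refine ⟨h ≫ k.fbar, ?_, ?_⟩
    · rw [Category.assoc, k.comm1, ← Category.assoc, h1]; rfl
    · rw [Category.assoc, k.comm2, ← Category.assoc, h2]; rfl

/-- The discrete internal preorder on an object. -/
def discPre {C : Type u} [Category.{v} C] (A : C) : PreordObj C where
  X := A
  R := A
  r1 := 𝟙 A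
  r2 := 𝟙 A
  jmono := fun a a' h _ => by simpa using h
  refl := ⟨𝟙 A, by simp, by simp⟩
  trans := by
    rintro B x y z ⟨h, h1, h2⟩ ⟨k, k1, k2⟩
    exact ⟨h, h1, by rw [h2, ← k1, k2]⟩

theorem preordHom_ext {C : Type u} [Category.{v} C] {P Q : PreordObj C} (a b : P ⟶ Q)
    (h : PreordHom.f a = PreordHom.f b) : a = b := by
  obtain ⟨f, fb, c1, c2⟩ := a
  obtain ⟨g, gb, d1, d2⟩ := b
  dsimp at h
  subst h
  have : fb = gb := Q.jmono _ _ (by rw [c1, d1]) (by rw [c2, d2])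
  subst this
  rfl

theorem discLift {C : Type u} [Category.{v} C] {A : C} {Q : PreordObj C} (f : A ⟶ Q.X) :
    ∃ a : discPre A ⟶ Q, PreordHom.f a = f := by
  obtain ⟨e, h1, h2⟩ := Q.refl
  refine ⟨PreordHom.mk f (f ≫ e) ?_ ?_, rfl⟩
  · show (f ≫ e) ≫ Q.r1 = 𝟙 A ≫ f
    simp [h1]
  · show (f ≫ e) ≫ Q.r2 = 𝟙 A ≫ f
    simp [h2]

theorem comp_f {C : Type u} [Category.{v} C] {P Q T : PreordObj C} (a : P ⟶ Q) (b : Q ⟶ T) :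
    PreordHom.f (a ≫ b) = PreordHom.f a ≫ PreordHom.f b := rfl

theorem discLe {C : Type u} [Category.{v} C] {P : PreordObj C} {A : C} (a b : P ⟶ discPre A) :
    a ≼ b ↔ a = b := by
  constructor
  · rintro ⟨h, h1, h2⟩
    exact preordHom_ext _ _ (h1.symm.trans h2)
  · rintro rfl
    exact OrdEnrichment.ord_refl a

theorem maltsevSymm {C : Type u} [Category.{v} C] (hM : IsMaltsevCat C) {P Q : PreordObj C}
    {a b : P ⟶ Q} (hab : a ≼ b) : b ≼ a :=
  hM Q.X Q.X ⟨Q.R, Q.r1, Q.r2, Q.jmono⟩ P.X (PreordHom.f b) (PreordHom.f a)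
    (PreordHom.f b) (PreordHom.f a) (OrdEnrichment.ord_refl b) hab (OrdEnrichment.ord_refl a)

/-- A regular category `C` is a Mal'tsev category if and only if the
`Ord`-category `𝕆(C)` of internal preorders in `C` is an `Ord`-Mal'tsev category. -/
theorem statement16 {C : Type u} [Category.{v} C] (hC : IsRegularCat C) :
    IsMaltsevCat C ↔ IsOrdMaltsev (PreordObj C) := by
  constructor
  · intro hM X Y D hD A x u u' y y' v hxy hyy huy huu huv
    have huy' : D.Mem u' y := hD u u' y' y (maltsevSymm hM huu) huy (maltsevSymm hM hyy)
    obtain ⟨a, ax, ay⟩ := hxy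
    obtain ⟨b, bu, bt⟩ := huy'
    obtain ⟨c, cu, cv⟩ := huv
    obtain ⟨h, h1, h2⟩ := hM X.X Y.X ⟨D.obj.X, PreordHom.f D.p, PreordHom.f D.q, by
        intro B s t hs ht
        obtain ⟨s', rfl⟩ := discLift s
        obtain ⟨t', rfl⟩ := discLift t
        rw [D.jointly_mono s' t' (preordHom_ext _ _ hs) (preordHom_ext _ _ ht)]⟩ A.X
        (PreordHom.f x) (PreordHom.f u') (PreordHom.f y) (PreordHom.f v)
        ⟨PreordHom.f a, congrArg PreordHom.f ax, congrArg PreordHom.f ay⟩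
        ⟨PreordHom.f b, congrArg PreordHom.f bu, congrArg PreordHom.f bt⟩
        ⟨PreordHom.f c, congrArg PreordHom.f cu, congrArg PreordHom.f cv⟩
    dsimp only at h h1 h2
    obtain ⟨s, hs⟩ := discLift (Q := D.obj) (A.r1 ≫ h)
    obtain ⟨t, ht⟩ := discLift (Q := D.obj) (A.r2 ≫ h)
    obtain ⟨k, k1, k2⟩ : s ≼ t := by
      apply D.jointly_ff
      · refine ⟨PreordHom.fbar x, ?_, ?_⟩
        · rw [comp_f, hs]
          have e : PreordHom.fbar x ≫ X.r1 = (A.r1 ≫ h) ≫ PreordHom.f D.p := by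
            rw [Category.assoc, h1]; exact PreordHom.comm1 x
          exact e
        · rw [comp_f, ht]
          have e : PreordHom.fbar x ≫ X.r2 = (A.r2 ≫ h) ≫ PreordHom.f D.p := by
            rw [Category.assoc, h1]; exact PreordHom.comm2 x
          exact e
      · refine ⟨PreordHom.fbar v, ?_, ?_⟩
        · rw [comp_f, hs]
          have e : PreordHom.fbar v ≫ Y.r1 = (A.r1 ≫ h) ≫ PreordHom.f D.q := by
            rw [Category.assoc, h2]; exact PreordHom.comm1 v
          exact e
        · rw [comp_f, ht]
          have e : PreordHom.fbar v ≫ Y.r2 = (A.r2 ≫ h) ≫ PreordHom.f D.q := by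
            rw [Category.assoc, h2]; exact PreordHom.comm2 v
          exact e
    exact ⟨PreordHom.mk h k (k1.trans hs) (k2.trans ht),
      preordHom_ext _ _ h1, preordHom_ext _ _ h2⟩
  · intro hO X Y D W x u y v hxy huy huv
    obtain ⟨p, hp⟩ := discLift (Q := discPre X) D.p
    obtain ⟨q, hq⟩ := discLift (Q := discPre Y) D.q
    have jm : ∀ {A : PreordObj C} (a a' : A ⟶ discPre D.obj),
        a ≫ p = a' ≫ p → a ≫ q = a' ≫ q → a = a' := by
      intro A a a' h1 h2
      apply preordHom_ext
      apply D.jointly_mono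
      · rw [← hp]; exact congrArg PreordHom.f h1
      · rw [← hq]; exact congrArg PreordHom.f h2
    let E : RelStr (discPre X) (discPre Y) :=
      { obj := discPre D.obj
        p := p
        q := q
        jointly_ff := fun a a' h1 h2 =>
          (discLe _ _).2 (jm a a' ((discLe _ _).1 h1) ((discLe _ _).1 h2))
        jointly_mono := jm }
    have hE : IsIdealRel E := by
      intro A x x' y y' h1 h h2
      rw [(discLe _ _).1 h1, ← (discLe _ _).1 h2]
      exact h
    obtain ⟨x', rfl⟩ := discLift (Q := discPre X) x
    obtain ⟨u', rfl⟩ := discLift (Q := discPre X) u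
    obtain ⟨y', rfl⟩ := discLift (Q := discPre Y) y
    obtain ⟨v', rfl⟩ := discLift (Q := discPre Y) v
    have key : ∀ (s : discPre W ⟶ discPre X) (t : discPre W ⟶ discPre Y),
        D.Mem (PreordHom.f s) (PreordHom.f t) → E.Mem s t := by
      rintro s t ⟨h, h1, h2⟩
      obtain ⟨h', rfl⟩ := discLift (Q := discPre D.obj) h
      refine ⟨h', preordHom_ext _ _ ?_, preordHom_ext _ _ ?_⟩
      · rw [← h1, ← hp]; rfl
      · rw [← h2, ← hq]; rfl
    obtain ⟨h, h1, h2⟩ := hO _ _ E hE x' u' u' y' y' v' (key _ _ hxy)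
      (OrdEnrichment.ord_refl _) (key _ _ huy) (OrdEnrichment.ord_refl _) (key _ _ huv)
    refine ⟨PreordHom.f h, ?_, ?_⟩
    · rw [← h1, ← hp]; rfl
    · rw [← h2, ← hq]; rfl
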